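/- Let G be a d-regular digraph (d ≥ 2) with adjacency matrix A on a finite vertex set V, let k ≥ 1, and let v ∈ V be a vertex not in 𝒞_k(G), i.e. no vertex v' reachable from v by some word w' ∈ Σ^{j'} with j' ≤ k and A^{w'}(v,v') ≥ 1 lies on a plain cycle of length at most k. Then for every word w ∈ Σ^k, the diagonal entry A^w(v,v) equals M_d(w), the number of w-paths in the free group F_d. -/

import Mathlib

/- Σ = {1,*} is encoded as `Bool`: `true` is the letter `1`, `false` is the letter `*`. -/

/-- `A^w := A^{w_1} ⋯ A^{w_k}` where `A^1 := A` and `A^* := Aᵀ`. -/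
def wMat {V : Type*} [Fintype V] [DecidableEq V] (A : Matrix V V ℕ) {k : ℕ}
    (w : Fin k → Bool) : Matrix V V ℕ :=
  (List.ofFn fun t => if w t then A else A.transpose).prod

/-- `A` is the adjacency matrix of a `d`-regular digraph. -/
def IsRegAdj {V : Type*} [Fintype V] (d : ℕ) (A : Matrix V V ℕ) : Prop :=
  (∀ i j, A i j ≤ 1) ∧ (∀ i, A i i = 0) ∧
  (∀ i, ∑ j, A i j = d) ∧ (∀ j, ∑ i, A i j = d)

/-- The signed pair `(a,b)^w`: `(a,b)` if `w = 1` and `(b,a)` if `w = *`. -/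
def sp {V : Type*} (b : Bool) (a c : V) : V × V := if b then (a, c) else (c, a)

open Classical in
/-- `2j` times the number of plain cycles of length `j`. -/
noncomputable def cycNum {V : Type*} [Fintype V] (A : Matrix V V ℕ) (j : ℕ) : ℕ :=
  ∑ w : Fin j → Bool, ∑ v : Fin (j + 1) → V,
    if v (Fin.last j) = v 0 ∧
        Function.Injective (fun t : Fin j => sp (w t) (v t.castSucc) (v t.succ)) then
      ∏ t : Fin j,
        A (sp (w t) (v t.castSucc) (v t.succ)).1 (sp (w t) (v t.castSucc) (v t.succ)).2
    else 0

/-- The vertex `v'` lies on a plain cycle of length at most `k`. -/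
def OnCycle {V : Type*} [Fintype V] (A : Matrix V V ℕ) (k : ℕ) (v' : V) : Prop :=
  ∃ j, 1 ≤ j ∧ j ≤ k ∧ ∃ u : Fin j → Bool, ∃ c : Fin (j + 1) → V,
    c 0 = v' ∧ c (Fin.last j) = v' ∧
    Function.Injective (fun t : Fin j => sp (u t) (c t.castSucc) (c t.succ)) ∧
    1 ≤ ∏ t : Fin j,
        A (sp (u t) (c t.castSucc) (c t.succ)).1 (sp (u t) (c t.castSucc) (c t.succ)).2

/-- `𝒞_k(G)`: the set of vertices `v` from which some vertex `v'` with
`A^{w'}(v,v') ≥ 1` for a word `w'` of length at most `k` lies on a plain cycle of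
length at most `k`. -/
def CkSet {V : Type*} [Fintype V] [DecidableEq V] (A : Matrix V V ℕ) (k : ℕ) : Set V :=
  {v | ∃ j', j' ≤ k ∧ ∃ w' : Fin j' → Bool, ∃ v' : V, 1 ≤ wMat A w' v v' ∧ OnCycle A k v'}

/-- The generator `g_i^{w}` in the free group `F_d`. -/
def gens (d : ℕ) (b : Bool) (i : Fin d) : FreeGroup (Fin d) :=
  if b then FreeGroup.of i else (FreeGroup.of i)⁻¹

/-- The product `g_{i_1}^{w_1} ⋯ g_{i_k}^{w_k}` in the free group `F_d`. -/
def wprod {d k : ℕ} (w : Fin k → Bool) (i : Fin k → Fin d) : FreeGroup (Fin d) :=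
  (List.ofFn fun t => gens d (w t) (i t)).prod

/-- `Mword d w` is the number of `w`-paths. -/
noncomputable def Mword (d : ℕ) {k : ℕ} (w : Fin k → Bool) : ℕ :=
  Nat.card {i : Fin k → Fin d // wprod w i = 1}

/-! A matrix over `ℕ` with all row and column sums `d` is a sum of `d` permutation matrices
(Birkhoff), so the free group `F_d` acts on `V`, and expanding `A^w` shows that `A^w(v,v)` counts
the tuples whose product in `F_d` fixes `v`. If a nontrivial product of length at most `k` fixed
`v`, its reduced word would trace a closed walk from `v` that never backtracks. Cutting this walk
at its first repeated vertex leaves a plain cycle of length at most `k`, reached from `v` in at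
most `k` steps. Hence for `v ∉ 𝒞_k(G)` only the products equal to `1` fix `v`. -/

section SumOfPermutations

variable {V : Type*} [DecidableEq V]

lemma permMatrix_apply {R : Type*} [Zero R] [One R] (σ : Equiv.Perm V) (x y : V) :
    σ.permMatrix R x y = if σ x = y then 1 else 0 := by
  simp [PEquiv.toMatrix_apply]

variable [Fintype V]

lemma exists_perm_forall_pos_of_mem_doublyStochastic {R : Type*} [Field R] [LinearOrder R]
    [IsStrictOrderedRing R] {M : Matrix V V R} (hM : M ∈ doublyStochastic R V) :
    ∃ σ : Equiv.Perm V, ∀ x, 0 < M x (σ x) := by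
  obtain ⟨c, hc_nonneg, hc_sum, rfl⟩ := exists_eq_sum_perm_of_mem_doublyStochastic hM
  obtain ⟨σ, -, hσ⟩ : ∃ σ ∈ Finset.univ, 0 < c σ :=
    Finset.exists_lt_of_sum_lt (f := 0) (by simp [hc_sum])
  refine ⟨σ, fun x => ?_⟩
  simp only [Matrix.sum_apply, Matrix.smul_apply, permMatrix_apply, smul_eq_mul, mul_ite, mul_one,
    mul_zero]
  refine Finset.sum_pos' (fun τ _ => ?_) ⟨σ, Finset.mem_univ σ, by simpa using hσ⟩
  split_ifs
  exacts [hc_nonneg τ, le_rfl]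

lemma exists_eq_permMatrix_add {d : ℕ} {A : Matrix V V ℕ} (hrow : ∀ x, ∑ y, A x y = d + 1)
    (hcol : ∀ y, ∑ x, A x y = d + 1) :
    ∃ (σ : Equiv.Perm V) (B : Matrix V V ℕ), A = σ.permMatrix ℕ + B := by
  have hd : (d + 1 : ℚ) ≠ 0 := by positivity
  have hM : (Matrix.of fun x y => (A x y : ℚ) / (d + 1)) ∈ doublyStochastic ℚ V := by
    refine mem_doublyStochastic_iff_sum.2 ⟨fun x y => by simp only [Matrix.of_apply]; positivity,
      fun x => ?_, fun y => ?_⟩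
    · simpa [← Finset.sum_div, div_eq_one_iff_eq hd] using mod_cast hrow x
    · simpa [← Finset.sum_div, div_eq_one_iff_eq hd] using mod_cast hcol y
  obtain ⟨σ, hσ⟩ := exists_perm_forall_pos_of_mem_doublyStochastic hM
  have hpos (x : V) : 0 < A x (σ x) := by
    by_contra! h
    simpa [Nat.le_zero.1 h] using hσ x
  refine ⟨σ, A - σ.permMatrix ℕ, Matrix.ext fun x y => ?_⟩
  rw [Matrix.add_apply, Matrix.sub_apply, permMatrix_apply]
  split_ifs with h
  · have := hpos x
    rw [h] at this
    omega
  · simp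

theorem exists_eq_sum_permMatrix {d : ℕ} {A : Matrix V V ℕ} (hrow : ∀ x, ∑ y, A x y = d)
    (hcol : ∀ y, ∑ x, A x y = d) :
    ∃ σ : Fin d → Equiv.Perm V, A = ∑ i, (σ i).permMatrix ℕ := by
  induction d generalizing A with
  | zero =>
    refine ⟨Fin.elim0, Matrix.ext fun x y => ?_⟩
    simpa using Finset.sum_eq_zero_iff.1 (hrow x) y (Finset.mem_univ y)
  | succ d ih =>
    obtain ⟨τ, B, rfl⟩ := exists_eq_permMatrix_add hrow hcol
    have hBrow (x : V) : ∑ y, B x y = d := by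
      have := hrow x
      simp only [Matrix.add_apply, permMatrix_apply, Finset.sum_add_distrib, Finset.sum_ite_eq,
        Finset.mem_univ, if_true] at this
      omega
    have hBcol (y : V) : ∑ x, B x y = d := by
      have := hcol y
      simp only [Matrix.add_apply, permMatrix_apply, Finset.sum_add_distrib,
        ← Equiv.eq_symm_apply, Finset.sum_ite_eq', Finset.mem_univ, if_true] at this
      omega
    obtain ⟨σ, rfl⟩ := ih hBrow hBcol
    exact ⟨Fin.cons τ σ, by simp [Fin.sum_univ_succ]⟩

-- `permMatrixHom` inverts its argument to be multiplicative; hence `σ y = x`, not `σ x = y`.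
lemma permMatrixHom_apply_apply {R : Type*} [NonAssocSemiring R] (σ : Equiv.Perm V) (x y : V) :
    (Matrix.permMatrixHom σ : Matrix V V R) x y = if σ y = x then 1 else 0 := by
  rw [Matrix.permMatrixHom_apply, permMatrix_apply]
  exact if_congr (Equiv.Perm.inv_eq_iff_eq.trans eq_comm) rfl rfl

lemma sum_permMatrixHom_apply {ι : Type*} [Fintype ι] (σ : ι → Equiv.Perm V) (x y : V) :
    (∑ i, Matrix.permMatrixHom (σ i) : Matrix V V ℕ) x y =
      (Finset.univ.filter fun i => σ i y = x).card := by
  simp only [Matrix.sum_apply, permMatrixHom_apply_apply, Finset.card_filter]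

lemma transpose_permMatrixHom {R : Type*} [NonAssocSemiring R] (σ : Equiv.Perm V) :
    (Matrix.permMatrixHom σ : Matrix V V R).transpose = Matrix.permMatrixHom σ⁻¹ := by
  simp only [Matrix.permMatrixHom_apply, Matrix.transpose_permMatrix]

end SumOfPermutations

section FreeGroupExpansion

lemma prod_ofFn_sum {R ι : Type*} [Semiring R] [Fintype ι] {k : ℕ} (f : Fin k → ι → R) :
    (List.ofFn fun t => ∑ i, f t i).prod =
      ∑ g : Fin k → ι, (List.ofFn fun t => f t (g t)).prod := by
  induction k with
  | zero => simp
  | succ k ih =>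
    rw [← (Fin.consEquiv fun _ => ι).sum_comp, Fintype.sum_prod_type]
    simp [List.ofFn_succ, Fin.consEquiv, ih, Finset.sum_mul_sum]

lemma wprod_eq_mk {d k : ℕ} (w : Fin k → Bool) (i : Fin k → Fin d) :
    wprod w i = FreeGroup.mk (List.ofFn fun t => (i t, w t)) := by
  rw [← FreeGroup.lift_of_apply (FreeGroup.mk _), FreeGroup.lift_mk, List.map_ofFn, wprod]
  simp only [gens, ← Bool.cond_eq_ite, Function.comp_def]

lemma norm_wprod_le {d k : ℕ} (w : Fin k → Bool) (i : Fin k → Fin d) : (wprod w i).norm ≤ k := by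
  rw [wprod_eq_mk]
  exact FreeGroup.norm_mk_le.trans_eq List.length_ofFn

theorem wMat_sum_permMatrixHom {V : Type*} [Fintype V] [DecidableEq V] {d k : ℕ}
    (σ : Fin d → Equiv.Perm V) (w : Fin k → Bool) :
    wMat (∑ i, Matrix.permMatrixHom (σ i)) w =
      ∑ i : Fin k → Fin d, Matrix.permMatrixHom (FreeGroup.lift σ (wprod w i)) := by
  let ρ : FreeGroup (Fin d) →* Matrix V V ℕ := Matrix.permMatrixHom.comp (FreeGroup.lift σ)
  have letter_eq_sum (ε : Bool) :
      (if ε then ∑ i, Matrix.permMatrixHom (σ i)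
        else (∑ i, Matrix.permMatrixHom (σ i)).transpose) = ∑ i, ρ (gens d ε i) := by
    cases ε <;> simp only [ρ, gens, Bool.false_eq_true, if_true, if_false, MonoidHom.comp_apply,
      map_inv, FreeGroup.lift_apply_of, Matrix.transpose_sum, transpose_permMatrixHom]
  calc wMat (∑ i, Matrix.permMatrixHom (σ i)) w
      = (List.ofFn fun t => ∑ i, ρ (gens d (w t) i)).prod := by simp only [wMat, letter_eq_sum]
    _ = ∑ i : Fin k → Fin d, (List.ofFn fun t => ρ (gens d (w t) (i t))).prod :=
      prod_ofFn_sum _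
    _ = ∑ i : Fin k → Fin d, ρ (wprod w i) := by
      simp only [wprod, map_list_prod, List.map_ofFn, Function.comp_def]

end FreeGroupExpansion

section Walk

variable {V : Type*}

/-- The signed pair traversed by step `t` of the walk with letters `ε` and vertices `u`. Walks are
encoded by sequences on `ℕ`, read up to a length given separately, so that truncating a walk does
not change it. -/
def signedEdge (ε : ℕ → Bool) (u : ℕ → V) (t : ℕ) : V × V :=
  sp (ε t) (u t) (u (t + 1))

/-- `u 0, …, u n` is a walk in the digraph `A` whose step `t` follows an edge forwards if `ε t` is
`true` and backwards if it is `false`. -/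
def IsWalk (A : Matrix V V ℕ) (ε : ℕ → Bool) (u : ℕ → V) (n : ℕ) : Prop :=
  ∀ t < n, 1 ≤ A (signedEdge ε u t).1 (signedEdge ε u t).2

/-- The first `n` steps of the walk never undo the preceding step. Two equal consecutive signed
pairs with the same letter are allowed: they repeat a loop. -/
def IsNonbacktracking (ε : ℕ → Bool) (u : ℕ → V) (n : ℕ) : Prop :=
  ∀ t, t + 1 < n → signedEdge ε u t = signedEdge ε u (t + 1) → ε t = ε (t + 1)

lemma IsWalk.mono {A : Matrix V V ℕ} {ε : ℕ → Bool} {u : ℕ → V} {m n : ℕ}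
    (hA : IsWalk A ε u n) (hmn : m ≤ n) : IsWalk A ε u m :=
  fun t ht => hA t (ht.trans_le hmn)

lemma IsNonbacktracking.mono {ε : ℕ → Bool} {u : ℕ → V} {m n : ℕ}
    (hε : IsNonbacktracking ε u n) (hmn : m ≤ n) : IsNonbacktracking ε u m :=
  fun t ht => hε t (ht.trans_le hmn)

lemma exists_injOn_Iio_of_eq {α : Type*} {u : ℕ → α} {s t : ℕ} (hst : s < t) (h : u s = u t) :
    ∃ a b, a < b ∧ b ≤ t ∧ u a = u b ∧ Set.InjOn u (Set.Iio b) := by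
  classical
  have hrepeat : ∃ b, ∃ a < b, u a = u b := ⟨t, s, hst, h⟩
  obtain ⟨a, hab, hu⟩ := Nat.find_spec hrepeat
  refine ⟨a, _, hab, Nat.find_min' hrepeat ⟨s, hst, h⟩, hu, fun x hx y hy hxy => ?_⟩
  rcases lt_trichotomy x y with hlt | heq | hlt
  · exact absurd ⟨x, hlt, hxy⟩ (Nat.find_min hrepeat hy)
  · exact heq
  · exact absurd ⟨y, hlt, hxy.symm⟩ (Nat.find_min hrepeat hx)

lemma sp_eq_sp_iff {ε δ : Bool} {a b c e : V} :
    sp ε a b = sp δ c e ↔ (ε = δ ∧ a = c ∧ b = e) ∨ (ε ≠ δ ∧ a = e ∧ b = c) := by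
  cases ε <;> cases δ <;> simp [sp, and_comm]

lemma IsNonbacktracking.injOn_signedEdge {ε : ℕ → Bool} {u : ℕ → V} {n : ℕ}
    (hε : IsNonbacktracking ε u n) (hu : Set.InjOn u (Set.Iio n)) :
    Set.InjOn (signedEdge ε u) (Set.Iio n) := by
  suffices h : ∀ s t, s < t → t < n → signedEdge ε u s ≠ signedEdge ε u t by
    intro s hs t ht heq
    by_contra hne
    rcases Nat.lt_or_gt_of_ne hne with hst | hts
    · exact h s t hst ht heq
    · exact h t s hts hs heq.symm
  intro s t hst htn heq
  obtain ⟨-, hsame, -⟩ | ⟨hopp, -, hrev⟩ := sp_eq_sp_iff.1 heq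
  · exact hst.ne (hu (hst.trans htn) htn hsame)
  · have hconsec : s + 1 = t := hu (by simp only [Set.mem_Iio]; omega) htn hrev
    subst hconsec
    exact hopp (hε s htn heq)

lemma IsWalk.onCycle [Fintype V] {A : Matrix V V ℕ} {ε : ℕ → Bool} {u : ℕ → V} {a b n k : ℕ}
    (hA : IsWalk A ε u n) (hab : a < b) (hbn : b ≤ n) (hbk : b - a ≤ k) (hu : u a = u b)
    (hinj : Set.InjOn (signedEdge ε u) (Set.Ico a b)) : OnCycle A k (u a) := by
  refine ⟨b - a, by omega, hbk, fun t => ε (a + t), fun t => u (a + t), by simp, ?_, ?_, ?_⟩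
  · simp only [Fin.val_last, Nat.add_sub_cancel' hab.le, hu]
  · intro s t hst
    have := hinj ⟨by omega, by omega⟩ ⟨by omega, by omega⟩ hst
    omega
  · exact Finset.one_le_prod' fun t _ => hA (a + t) (by omega)

variable [Fintype V] [DecidableEq V] {A : Matrix V V ℕ}

lemma wMat_succ_last {n : ℕ} (w : Fin (n + 1) → Bool) :
    wMat A w = wMat A (fun t => w t.castSucc) *
      if w (Fin.last n) then A else A.transpose := by
  rw [wMat, List.ofFn_succ_last, List.prod_append, List.prod_singleton, wMat]

lemma IsWalk.one_le_wMat {ε : ℕ → Bool} {u : ℕ → V} {n : ℕ} (hA : IsWalk A ε u n) :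
    1 ≤ wMat A (fun t : Fin n => ε t) (u 0) (u n) := by
  induction n with
  | zero => simp [wMat]
  | succ n ih =>
    have hinit : 1 ≤ wMat A (fun t : Fin n => ε t) (u 0) (u n) :=
      ih (hA.mono n.le_succ)
    have hlast : 1 ≤ (if ε n then A else A.transpose) (u n) (u (n + 1)) := by
      have := hA n n.lt_succ_self
      cases h : ε n <;> simpa [signedEdge, sp, h] using this
    rw [wMat_succ_last, Matrix.mul_apply]
    refine (one_le_mul hinit hlast).trans ?_
    exact Finset.single_le_sum
      (f := fun x => wMat A (fun t : Fin n => ε t) (u 0) x *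
        (if ε n then A else A.transpose) x (u (n + 1)))
      (fun _ _ => Nat.zero_le _) (Finset.mem_univ (u n))

theorem IsWalk.mem_CkSet {ε : ℕ → Bool} {u : ℕ → V} {n k : ℕ} (hA : IsWalk A ε u n)
    (hε : IsNonbacktracking ε u n) (hclosed : u 0 = u n) (hn : 0 < n) (hnk : n ≤ k) :
    u 0 ∈ CkSet A k := by
  obtain ⟨a, b, hab, hbn, hu, hinj⟩ := exists_injOn_Iio_of_eq hn hclosed
  have hedge : Set.InjOn (signedEdge ε u) (Set.Iio b) :=
    (hε.mono hbn).injOn_signedEdge hinj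
  have hreach : IsWalk A ε u a := hA.mono (hab.le.trans hbn)
  exact ⟨a, by omega, _, u a, hreach.one_le_wMat,
    hA.onCycle hab hbn (by omega) hu (hedge.mono Set.Ico_subset_Iio_self)⟩

end Walk

section WordWalk

variable {ι V : Type*}

/-- The letters of the word `L`, `true` for a generator and `false` for an inverse; `true` is a
placeholder past the end of `L`. -/
def wordLetter (L : List (ι × Bool)) (t : ℕ) : Bool :=
  (L.map Prod.snd).getD t true

/-- The vertices visited when the word `L` acts on `v`, read backwards from the image of `v` (at
`t = 0`) to `v` itself (at `t = L.length`), so that step `t` uses the letter `t` of `L`. -/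
def wordVertex (σ : ι → Equiv.Perm V) (L : List (ι × Bool)) (v : V) (t : ℕ) : V :=
  FreeGroup.lift σ (FreeGroup.mk (L.drop t)) v

variable {σ : ι → Equiv.Perm V} {L : List (ι × Bool)} {v : V}

lemma wordVertex_zero : wordVertex σ L v 0 = FreeGroup.lift σ (FreeGroup.mk L) v := rfl

lemma wordVertex_length : wordVertex σ L v L.length = v := by
  simp [wordVertex]

lemma wordLetter_eq_getElem {t : ℕ} (ht : t < L.length) : wordLetter L t = L[t].2 := by
  simp [wordLetter, ht]

lemma wordVertex_eq_cond {t : ℕ} (ht : t < L.length) :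
    wordVertex σ L v t =
      (cond L[t].2 (σ L[t].1) (σ L[t].1)⁻¹) (wordVertex σ L v (t + 1)) := by
  simp only [wordVertex, List.drop_eq_getElem_cons ht, FreeGroup.lift_mk, List.map_cons,
    List.prod_cons, Equiv.Perm.mul_apply]

lemma apply_snd_signedEdge_word {t : ℕ} (ht : t < L.length) :
    σ L[t].1 (signedEdge (wordLetter L) (wordVertex σ L v) t).2 =
      (signedEdge (wordLetter L) (wordVertex σ L v) t).1 := by
  have hstep := wordVertex_eq_cond (σ := σ) (v := v) ht
  rw [signedEdge, wordLetter_eq_getElem ht]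
  cases h : L[t].2 <;> simp [sp, hstep, h]

lemma isWalk_word [Fintype ι] [Fintype V] [DecidableEq V] :
    IsWalk (∑ i, Matrix.permMatrixHom (σ i)) (wordLetter L) (wordVertex σ L v) L.length := by
  intro t ht
  rw [sum_permMatrixHom_apply]
  exact Finset.card_pos.2 ⟨L[t].1, by simpa using apply_snd_signedEdge_word ht⟩

lemma isNonbacktracking_word (hσ : ∀ y, Function.Injective fun i => σ i y)
    (hL : FreeGroup.IsReduced L) :
    IsNonbacktracking (wordLetter L) (wordVertex σ L v) L.length := by
  intro t ht heq
  have hgen : L[t].1 = L[t + 1].1 := by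
    have h := apply_snd_signedEdge_word (σ := σ) (v := v) (t.lt_succ_self.trans ht)
    rw [heq, ← apply_snd_signedEdge_word ht] at h
    exact hσ _ h
  rw [wordLetter_eq_getElem, wordLetter_eq_getElem ht]
  exact List.isChain_iff_getElem.1 hL t ht hgen

theorem eq_one_of_lift_apply_eq_self [Fintype ι] [DecidableEq ι] [Fintype V] [DecidableEq V]
    (hσ : ∀ y, Function.Injective fun i => σ i y) {k : ℕ}
    (hv : v ∉ CkSet (∑ i, Matrix.permMatrixHom (σ i)) k) {g : FreeGroup ι} (hg : g.norm ≤ k)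
    (hfix : FreeGroup.lift σ g v = v) : g = 1 := by
  have hstart : wordVertex σ g.toWord v 0 = v := by rw [wordVertex_zero, FreeGroup.mk_toWord, hfix]
  by_contra hne
  have hpos : 0 < g.norm := Nat.pos_of_ne_zero (mt FreeGroup.norm_eq_zero.1 hne)
  exact hv (hstart ▸ isWalk_word.mem_CkSet (isNonbacktracking_word hσ FreeGroup.isReduced_toWord)
    (hstart.trans wordVertex_length.symm) hpos hg)

end WordWalk

theorem treelike_diagonal_entry_general {V : Type*} [Fintype V] [DecidableEq V] {d k n : ℕ}
    {A : Matrix V V ℕ} (hA : ∀ x y, A x y ≤ 1) (hrow : ∀ x, ∑ y, A x y = d)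
    (hcol : ∀ y, ∑ x, A x y = d) {v : V} (hv : v ∉ CkSet A k) (hn : n ≤ k) (w : Fin n → Bool) :
    wMat A w v v = Mword d w := by
  obtain ⟨τ, hτ⟩ := exists_eq_sum_permMatrix hrow hcol
  obtain ⟨σ, rfl⟩ : ∃ σ : Fin d → Equiv.Perm V, A = ∑ i, Matrix.permMatrixHom (σ i) :=
    ⟨fun i => (τ i)⁻¹, by simp only [hτ, Matrix.permMatrixHom_apply, inv_inv]⟩
  have hσ (y : V) : Function.Injective fun i => σ i y := fun i j hij => by
    have hcard := hA (σ j y) y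
    rw [sum_permMatrixHom_apply] at hcard
    exact Finset.card_le_one.1 hcard i (by simpa using hij) j (by simp)
  have hfix (i : Fin n → Fin d) : FreeGroup.lift σ (wprod w i) v = v ↔ wprod w i = 1 :=
    ⟨eq_one_of_lift_apply_eq_self hσ hv ((norm_wprod_le w i).trans hn), fun h => by simp [h]⟩
  rw [wMat_sum_permMatrixHom, sum_permMatrixHom_apply, Mword, Nat.subtype_card]
  simp [hfix]

/-- If the radius-`k` neighbourhood of `v` is tree-like (`v ∉ 𝒞_k(G)`), then the
diagonal entry `A^w(v,v)` agrees with the corresponding count `M_d(w)` of `w`-paths in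
the `d`-regular directed tree. -/
theorem treelike_diagonal_entry (d k : ℕ) (hd : 2 ≤ d) (hk : 1 ≤ k) {V : Type}
    [Fintype V] [DecidableEq V] (A : Matrix V V ℕ) (hreg : IsRegAdj d A)
    (v : V) (hv : v ∉ CkSet A k) :
    ∀ w : Fin k → Bool, wMat A w v v = Mword d w := by
  exact treelike_diagonal_entry_general hreg.1 hreg.2.2.1 hreg.2.2.2 hv le_rfl
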